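/- There exists a constant C > 0 such that for every T > 0 and every smooth solution u of the 1-dimensional Schrödinger flow with Neumann boundary conditions on [0,T], for all t ∈ [0,T]: (d/dt) ∫₀¹ |∂_t²u(x,t)|² dx ≤ C ( ‖∂_t u(·,t)‖²_{H¹} + ‖u(·,t)‖²_{H²} + 1 )³ ( ‖∂_t²u(·,t)‖²_{H¹} + 1 ). -/

import Mathlib

open MeasureTheory Set

noncomputable section

abbrev E3 := EuclideanSpace ℝ (Fin 3)

/-- The cross product on `EuclideanSpace ℝ (Fin 3)`. -/
def cross3 (a b : E3) : E3 :=
  (WithLp.equiv 2 (Fin 3 → ℝ)).symm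
    (crossProduct ((WithLp.equiv 2 (Fin 3 → ℝ)) a) ((WithLp.equiv 2 (Fin 3 → ℝ)) b))

/-- Partial derivative in the space variable of `u = u x t`. -/
def pdx (u : ℝ → ℝ → E3) : ℝ → ℝ → E3 := fun x t => deriv (fun y => u y t) x

/-- Partial derivative in the time variable of `u = u x t`. -/
def pdt (u : ℝ → ℝ → E3) : ℝ → ℝ → E3 := fun x t => deriv (fun s => u x s) t

/-- `u` is a smooth solution of the 1-dimensional Schrödinger flow with Neumann
boundary conditions on `[0,1] × [0,T]`. -/
def IsSol (T : ℝ) (u : ℝ → ℝ → E3) : Prop :=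
  ContDiff ℝ (⊤ : ℕ∞) (fun p : ℝ × ℝ => u p.1 p.2) ∧
  (∀ x ∈ Icc (0:ℝ) 1, ∀ t ∈ Icc (0:ℝ) T, ‖u x t‖ = 1) ∧
  (∀ x ∈ Icc (0:ℝ) 1, ∀ t ∈ Icc (0:ℝ) T, pdt u x t = cross3 (u x t) (pdx (pdx u) x t)) ∧
  (∀ t ∈ Icc (0:ℝ) T, pdx u 0 t = 0 ∧ pdx u 1 t = 0)

/-- Squared `L²` norm on `[0,1]`. -/
def L2sq (f : ℝ → E3) : ℝ := ∫ x in (0:ℝ)..1, ‖f x‖ ^ 2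

/-- Squared `H^k` Sobolev norm on `[0,1]`. -/
def Hsq (k : ℕ) (f : ℝ → E3) : ℝ :=
  ∑ j ∈ Finset.range (k + 1), ∫ x in (0:ℝ)..1, ‖deriv^[j] f x‖ ^ 2

/-!
Write `v = ∂ₜu` and `w = ∂ₜ²u`. Differentiating the flow twice in time gives
`∂ₜw = w × u_xx + 2 v × v_xx + u × w_xx`. Paired with `w`, the first term vanishes, and the last one
is `∂ₓ⟪w, u × w_x⟫ - ⟪w, u_x × w_x⟫`, whose exact derivative integrates to zero by the Neumann
condition. This leaves `d/dt ‖w‖² = ∫ 4⟪w, v × v_xx⟫ - 2⟪w, u_x × w_x⟫`.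

The only factor not visible on the right-hand side of the theorem is `v_xx`. Its component along `u`
is controlled because `⟪u, v⟫ = 0` may be differentiated twice in `x`, and its component orthogonal
to `u` because `u × v_xx = w - v × u_xx`. The Sobolev embedding `H¹ ⊆ L^∞` for `v` and `u_x` and
Young's inequality then give the estimate, with exponent `2` in place of `3`.
-/

section CrossProduct

lemma inner_eq_dotProduct (a b : E3) : inner ℝ a b = a.ofLp ⬝ᵥ b.ofLp := by
  rw [EuclideanSpace.inner_eq_star_dotProduct, star_trivial, dotProduct_comm]

lemma inner_self_cross3 (a b : E3) : inner ℝ a (cross3 a b) = 0 :=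
  (inner_eq_dotProduct _ _).trans (dot_self_cross _ _)

lemma inner_cross3_self (a b : E3) : inner ℝ b (cross3 a b) = 0 :=
  (inner_eq_dotProduct _ _).trans (dot_cross_self _ _)

lemma norm_cross3_sq_add_inner_sq (a b : E3) :
    ‖cross3 a b‖ ^ 2 + inner ℝ a b ^ 2 = ‖a‖ ^ 2 * ‖b‖ ^ 2 := by
  have lagrange : inner ℝ (cross3 a b) (cross3 a b)
      = inner ℝ a a * inner ℝ b b - inner ℝ a b * inner ℝ b a := by
    simp only [inner_eq_dotProduct]
    exact cross_dot_cross _ _ _ _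
  rw [real_inner_comm a b] at lagrange
  simp only [← real_inner_self_eq_norm_sq]
  linear_combination lagrange

lemma norm_cross3_le (a b : E3) : ‖cross3 a b‖ ≤ ‖a‖ * ‖b‖ := by
  refine le_of_sq_le_sq ?_ (by positivity)
  rw [mul_pow, ← norm_cross3_sq_add_inner_sq]
  exact le_add_of_nonneg_right (sq_nonneg _)

lemma abs_inner_cross3_le (a b c : E3) : |inner ℝ a (cross3 b c)| ≤ ‖a‖ * (‖b‖ * ‖c‖) :=
  (abs_real_inner_le_norm _ _).trans (by gcongr; exact norm_cross3_le _ _)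

lemma norm_le_abs_inner_add_norm_cross3 {e : E3} (he : ‖e‖ = 1) (a : E3) :
    ‖a‖ ≤ |inner ℝ e a| + ‖cross3 e a‖ := by
  have pythagoras := norm_cross3_sq_add_inner_sq e a
  rw [he, one_pow, one_mul, ← sq_abs (inner ℝ e a)] at pythagoras
  refine le_of_sq_le_sq ?_ (by positivity)
  rw [← pythagoras, add_comm]
  exact pow_add_pow_le (abs_nonneg _) (norm_nonneg _) two_ne_zero

/-- The cross product as a continuous bilinear map, which gives access to Mathlib's calculus of
bilinear maps. -/
def crossL : E3 →L[ℝ] E3 →L[ℝ] E3 :=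
  LinearMap.mkContinuous₂
    (LinearMap.mk₂ ℝ cross3 (by simp [cross3]) (by simp [cross3]) (by simp [cross3])
      (by simp [cross3]))
    1 fun a b => by simpa using norm_cross3_le a b

lemma cross3_zero_right (a : E3) : cross3 a 0 = 0 := map_zero (crossL a)

@[fun_prop]
lemma continuous_cross3 {X : Type*} [TopologicalSpace X] {f g : X → E3} (hf : Continuous f)
    (hg : Continuous g) : Continuous fun x => cross3 (f x) (g x) :=
  crossL.continuous₂.comp₂ hf hg

lemma hasDerivAt_cross3 {f g : ℝ → E3} {f' g' : E3} {x : ℝ} (hf : HasDerivAt f f' x)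
    (hg : HasDerivAt g g' x) :
    HasDerivAt (fun y => cross3 (f y) (g y)) (cross3 f' (g x) + cross3 (f x) g') x := by
  rw [add_comm]
  exact crossL.hasDerivAt_of_bilinear (fun _ => hf) (fun _ => hg)

end CrossProduct

section Calculus

lemma eq_of_hasDerivAt_of_eqOn_Icc {F : Type*} [NormedAddCommGroup F] [NormedSpace ℝ F] {a b : ℝ}
    (hab : a < b) {f g : ℝ → F} {f' g' : F} {x : ℝ} (hx : x ∈ Icc a b) (h : EqOn f g (Icc a b))
    (hf : HasDerivAt f f' x) (hg : HasDerivAt g g' x) : f' = g' :=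
  (uniqueDiffOn_Icc hab x hx).eq_deriv _ hf.hasDerivWithinAt
    (hg.hasDerivWithinAt.congr h (h hx))

lemma hasDerivAt_intervalIntegral_of_continuous {F : Type*} [NormedAddCommGroup F]
    [NormedSpace ℝ F] {f f' : ℝ → ℝ → F} (hf : ∀ s, Continuous fun x => f x s)
    (hf' : Continuous fun p : ℝ × ℝ => f' p.1 p.2)
    (hderiv : ∀ x s, HasDerivAt (fun s => f x s) (f' x s) s) (a b t : ℝ) :
    HasDerivAt (fun s => ∫ x in a..b, f x s) (∫ x in a..b, f' x t) t := by
  obtain ⟨B, hB⟩ := (isCompact_uIcc (a := a) (b := b)).prod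
    (isCompact_Icc (a := t - 1) (b := t + 1)) |>.exists_bound_of_continuousOn hf'.continuousOn
  have hf't : Continuous fun x => f' x t := hf'.comp (.prodMk_left t)
  exact (intervalIntegral.hasDerivAt_integral_of_dominated_loc_of_deriv_le
    (F := fun s x => f x s) (F' := fun s x => f' x s) (bound := fun _ => B)
    (Icc_mem_nhds (by linarith) (by linarith))
    (.of_forall fun s => (hf s).aestronglyMeasurable) ((hf t).intervalIntegrable _ _)
    hf't.aestronglyMeasurable
    (ae_of_all _ fun x hx s hs => hB (x, s) ⟨uIoc_subset_uIcc hx, hs⟩)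
    intervalIntegrable_const (ae_of_all _ fun x _ s _ => hderiv x s)).2

variable {E : Type*} [NormedAddCommGroup E] [InnerProductSpace ℝ E] {a b : ℝ} {f f' : ℝ → E}

lemma norm_sq_sub_norm_sq_le_integral (hf : ∀ x ∈ Icc a b, HasDerivAt f (f' x) x)
    (hf' : ContinuousOn f' (Icc a b)) {x y : ℝ} (hx : x ∈ Icc a b) (hy : y ∈ Icc a b) :
    ‖f x‖ ^ 2 - ‖f y‖ ^ 2 ≤ ∫ z in a..b, (‖f z‖ ^ 2 + ‖f' z‖ ^ 2) := by
  have hab : a ≤ b := hx.1.trans hx.2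
  have hfc : ContinuousOn f (Icc a b) := fun z hz => (hf z hz).continuousAt.continuousWithinAt
  have hsub : uIcc y x ⊆ Icc a b := ordConnected_Icc.uIcc_subset hy hx
  have hg : ContinuousOn (fun z => 2 * inner ℝ (f z) (f' z)) (Icc a b) := by fun_prop
  have hh : ContinuousOn (fun z => ‖f z‖ ^ 2 + ‖f' z‖ ^ 2) (Icc a b) := by fun_prop
  have young (z : ℝ) : ‖2 * inner ℝ (f z) (f' z)‖ ≤ ‖f z‖ ^ 2 + ‖f' z‖ ^ 2 := by
    rw [Real.norm_eq_abs, abs_mul, abs_two]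
    linarith [abs_real_inner_le_norm (f z) (f' z), two_mul_le_add_sq ‖f z‖ ‖f' z‖]
  calc ‖f x‖ ^ 2 - ‖f y‖ ^ 2 = ∫ z in y..x, 2 * inner ℝ (f z) (f' z) :=
        (intervalIntegral.integral_eq_sub_of_hasDerivAt (fun z hz => (hf z (hsub hz)).norm_sq)
          (hg.mono hsub).intervalIntegrable).symm
    _ ≤ |∫ z in y..x, (‖f z‖ ^ 2 + ‖f' z‖ ^ 2)| :=
        (le_abs_self _).trans (intervalIntegral.norm_integral_le_abs_of_norm_le
          (ae_of_all _ young) (hh.mono hsub).intervalIntegrable)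
    _ ≤ |∫ z in a..b, (‖f z‖ ^ 2 + ‖f' z‖ ^ 2)| :=
        intervalIntegral.abs_integral_mono_interval
          (uIoc_subset_uIoc_of_uIcc_subset_uIcc (uIcc_of_le hab ▸ hsub))
          (ae_of_all _ fun z => by positivity)
          (hh.mono (uIcc_of_le hab).subset).intervalIntegrable
    _ = ∫ z in a..b, (‖f z‖ ^ 2 + ‖f' z‖ ^ 2) :=
        abs_of_nonneg (intervalIntegral.integral_nonneg hab fun z _ => by positivity)

lemma mul_norm_sq_le_integral (hf : ∀ x ∈ Icc a b, HasDerivAt f (f' x) x)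
    (hf' : ContinuousOn f' (Icc a b)) {x : ℝ} (hx : x ∈ Icc a b) :
    (b - a) * ‖f x‖ ^ 2
      ≤ (∫ y in a..b, ‖f y‖ ^ 2) + (b - a) * ∫ y in a..b, (‖f y‖ ^ 2 + ‖f' y‖ ^ 2) := by
  have hab : a ≤ b := hx.1.trans hx.2
  have hfc : ContinuousOn f (Icc a b) := fun z hz => (hf z hz).continuousAt.continuousWithinAt
  have hfi : IntervalIntegrable (fun y => ‖f y‖ ^ 2) volume a b :=
    ContinuousOn.intervalIntegrable (by rw [uIcc_of_le hab]; fun_prop)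
  have average := intervalIntegral.integral_mono_on hab intervalIntegrable_const
    (hfi.add intervalIntegrable_const)
    fun y hy => sub_le_iff_le_add'.1 (norm_sq_sub_norm_sq_le_integral hf hf' hx hy)
  rwa [intervalIntegral.integral_add hfi intervalIntegrable_const,
    intervalIntegral.integral_const, intervalIntegral.integral_const, smul_eq_mul,
    smul_eq_mul] at average

end Calculus

section SobolevNorms

lemma L2sq_nonneg (f : ℝ → E3) : 0 ≤ L2sq f :=
  intervalIntegral.integral_nonneg zero_le_one fun _ _ => sq_nonneg _

lemma Hsq_nonneg (k : ℕ) (f : ℝ → E3) : 0 ≤ Hsq k f :=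
  Finset.sum_nonneg fun _ _ => L2sq_nonneg _

lemma Hsq_one (f : ℝ → E3) : Hsq 1 f = L2sq f + L2sq (deriv f) := by
  simp only [Hsq, L2sq, Finset.sum_range_succ, Finset.sum_range_zero, zero_add,
    Function.iterate_zero_apply, Function.iterate_one]

lemma Hsq_one_slice (u : ℝ → ℝ → E3) (t : ℝ) :
    Hsq 1 (fun x => u x t) = L2sq (fun x => u x t) + L2sq (fun x => pdx u x t) :=
  Hsq_one _

lemma Hsq_deriv_le_Hsq_succ (k : ℕ) (f : ℝ → E3) : Hsq k (deriv f) ≤ Hsq (k + 1) f := by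
  rw [Hsq, Hsq, Finset.sum_range_succ' _ (k + 1)]
  exact le_add_of_nonneg_right (L2sq_nonneg f)

lemma norm_sq_le_two_mul_Hsq_one {f : ℝ → E3} (hf : ContDiff ℝ 1 f) {x : ℝ}
    (hx : x ∈ Icc (0 : ℝ) 1) : ‖f x‖ ^ 2 ≤ 2 * Hsq 1 f := by
  have hf' : Continuous (deriv f) := hf.continuous_deriv le_rfl
  have hfc : Continuous f := hf.continuous
  have sobolev := mul_norm_sq_le_integral
    (fun y _ => (hf.differentiable one_ne_zero y).hasDerivAt) hf'.continuousOn hx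
  rw [intervalIntegral.integral_add (Continuous.intervalIntegrable (by fun_prop) _ _)
    (Continuous.intervalIntegrable (by fun_prop) _ _), sub_zero, one_mul, one_mul] at sobolev
  change _ ≤ L2sq f + (L2sq f + L2sq (deriv f)) at sobolev
  linarith [Hsq_one f, L2sq_nonneg (deriv f)]

end SobolevNorms

/-- Joint smoothness of a space-time map `u = u x t` on all of `ℝ × ℝ`, the regularity required in
`IsSol`. -/
def JointlySmooth (u : ℝ → ℝ → E3) : Prop :=
  ContDiff ℝ (⊤ : ℕ∞) fun p : ℝ × ℝ => u p.1 p.2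

namespace JointlySmooth

variable {u : ℝ → ℝ → E3}

lemma hasDerivAt_fderiv_fst (hu : JointlySmooth u) (x t : ℝ) :
    HasDerivAt (fun y => u y t) (fderiv ℝ (fun p : ℝ × ℝ => u p.1 p.2) (x, t) (1, 0)) x :=
  (hu.differentiable (by simp) (x, t)).hasFDerivAt.comp_hasDerivAt (f := fun y => (y, t)) x
    ((hasDerivAt_id x).prodMk (hasDerivAt_const x t))

lemma hasDerivAt_fderiv_snd (hu : JointlySmooth u) (x t : ℝ) :
    HasDerivAt (fun s => u x s) (fderiv ℝ (fun p : ℝ × ℝ => u p.1 p.2) (x, t) (0, 1)) t :=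
  (hu.differentiable (by simp) (x, t)).hasFDerivAt.comp_hasDerivAt (f := fun s => (x, s)) t
    ((hasDerivAt_const t x).prodMk (hasDerivAt_id t))

lemma pdx_eq_fderiv (hu : JointlySmooth u) :
    (fun p : ℝ × ℝ => pdx u p.1 p.2) = fun p => fderiv ℝ (fun p : ℝ × ℝ => u p.1 p.2) p (1, 0) :=
  funext fun p => (hu.hasDerivAt_fderiv_fst p.1 p.2).deriv

lemma pdt_eq_fderiv (hu : JointlySmooth u) :
    (fun p : ℝ × ℝ => pdt u p.1 p.2) = fun p => fderiv ℝ (fun p : ℝ × ℝ => u p.1 p.2) p (0, 1) :=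
  funext fun p => (hu.hasDerivAt_fderiv_snd p.1 p.2).deriv

lemma hasDerivAt_pdx (hu : JointlySmooth u) (x t : ℝ) :
    HasDerivAt (fun y => u y t) (pdx u x t) x :=
  (hu.hasDerivAt_fderiv_fst x t).differentiableAt.hasDerivAt

lemma hasDerivAt_pdt (hu : JointlySmooth u) (x t : ℝ) :
    HasDerivAt (fun s => u x s) (pdt u x t) t :=
  (hu.hasDerivAt_fderiv_snd x t).differentiableAt.hasDerivAt

lemma contDiff_fderiv (hu : JointlySmooth u) :
    ContDiff ℝ (⊤ : ℕ∞) (fderiv ℝ fun p : ℝ × ℝ => u p.1 p.2) :=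
  hu.fderiv_right (by simp)

lemma dx (hu : JointlySmooth u) : JointlySmooth (pdx u) := by
  rw [JointlySmooth, hu.pdx_eq_fderiv]
  exact hu.contDiff_fderiv.clm_apply contDiff_const

lemma dt (hu : JointlySmooth u) : JointlySmooth (pdt u) := by
  rw [JointlySmooth, hu.pdt_eq_fderiv]
  exact hu.contDiff_fderiv.clm_apply contDiff_const

lemma pdx_pdt_comm (hu : JointlySmooth u) : pdx (pdt u) = pdt (pdx u) := by
  funext x t
  have hd : DifferentiableAt ℝ (fderiv ℝ fun p : ℝ × ℝ => u p.1 p.2) (x, t) :=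
    hu.contDiff_fderiv.differentiable (by simp) _
  have hxt := (hu.dt.hasDerivAt_fderiv_fst x t).deriv
  have htx := (hu.dx.hasDerivAt_fderiv_snd x t).deriv
  rw [hu.pdt_eq_fderiv, fderiv_clm_apply hd (differentiableAt_const _)] at hxt
  rw [hu.pdx_eq_fderiv, fderiv_clm_apply hd (differentiableAt_const _)] at htx
  have symm : IsSymmSndFDerivAt ℝ (fun p : ℝ × ℝ => u p.1 p.2) (x, t) :=
    (hu.of_le (WithTop.coe_le_coe.2 le_top)).contDiffAt.isSymmSndFDerivAt
      minSmoothness_of_isRCLikeNormedField.le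
  calc pdx (pdt u) x t
      = fderiv ℝ (fderiv ℝ fun p : ℝ × ℝ => u p.1 p.2) (x, t) (1, 0) (0, 1) := by
        simpa using! hxt
    _ = fderiv ℝ (fderiv ℝ fun p : ℝ × ℝ => u p.1 p.2) (x, t) (0, 1) (1, 0) := symm _ _
    _ = pdt (pdx u) x t := by simpa using! htx.symm

lemma pdx_pdx_pdt_comm (hu : JointlySmooth u) : pdx (pdx (pdt u)) = pdt (pdx (pdx u)) := by
  rw [hu.pdx_pdt_comm, hu.dx.pdx_pdt_comm]

lemma pdt_eq_zero {a b : ℝ} (hab : a < b) (hu : JointlySmooth u) {x t : ℝ}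
    (h : ∀ s ∈ Icc a b, u x s = 0) (ht : t ∈ Icc a b) : pdt u x t = 0 :=
  eq_of_hasDerivAt_of_eqOn_Icc hab ht h (hu.hasDerivAt_pdt x t) (hasDerivAt_const t 0)

lemma contDiff_slice (hu : JointlySmooth u) {n : ℕ∞} (t : ℝ) : ContDiff ℝ n fun x => u x t :=
  (hu.comp (contDiff_prodMk_left t)).of_le (WithTop.coe_le_coe.2 le_top)

lemma continuous_slice (hu : JointlySmooth u) (t : ℝ) : Continuous fun x => u x t :=
  (hu.contDiff_slice (n := 0) t).continuous

lemma hasDerivAt_integral_norm_sq (hu : JointlySmooth u) (a b t : ℝ) :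
    HasDerivAt (fun s => ∫ x in a..b, ‖u x s‖ ^ 2)
      (∫ x in a..b, 2 * inner ℝ (u x t) (pdt u x t)) t := by
  have hc := hu.continuous
  have hc' := hu.dt.continuous
  exact hasDerivAt_intervalIntegral_of_continuous
    (f' := fun x s => 2 * inner ℝ (u x s) (pdt u x s))
    (fun s => (hu.continuous_slice s).norm.pow 2) (by fun_prop)
    (fun x s => (hu.hasDerivAt_pdt x s).norm_sq) a b t

end JointlySmooth

/-- The density `⟪w, u × w_x⟫`, with `w = ∂ₜ²u`, whose endpoint values are the boundary terms in the
energy identity for `w`. -/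
def energyFlux (u : ℝ → ℝ → E3) (x t : ℝ) : ℝ :=
  inner ℝ (pdt (pdt u) x t) (cross3 (u x t) (pdx (pdt (pdt u)) x t))

/-- The density `4⟪w, v × v_xx⟫ - 2⟪w, u_x × w_x⟫`, with `v = ∂ₜu` and `w = ∂ₜ²u`, whose integral is
the time derivative of the energy `∫ ‖w‖²` along the flow. -/
def energyRate (u : ℝ → ℝ → E3) (x t : ℝ) : ℝ :=
  4 * inner ℝ (pdt (pdt u) x t) (cross3 (pdt u x t) (pdx (pdx (pdt u)) x t))
    - 2 * inner ℝ (pdt (pdt u) x t) (cross3 (pdx u x t) (pdx (pdt (pdt u)) x t))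

namespace JointlySmooth

variable {u : ℝ → ℝ → E3}

lemma hasDerivAt_energyFlux (hu : JointlySmooth u) (x t : ℝ) :
    HasDerivAt (fun y => energyFlux u y t)
      (inner ℝ (pdt (pdt u) x t) (cross3 (u x t) (pdx (pdx (pdt (pdt u))) x t))
        + inner ℝ (pdt (pdt u) x t) (cross3 (pdx u x t) (pdx (pdt (pdt u)) x t))) x := by
  refine ((hu.dt.dt.hasDerivAt_pdx x t).inner ℝ
    (hasDerivAt_cross3 (hu.hasDerivAt_pdx x t) (hu.dt.dt.dx.hasDerivAt_pdx x t))).congr_deriv ?_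
  rw [inner_cross3_self, inner_add_right]
  ring

lemma contDiff_energyFlux (hu : JointlySmooth u) (t : ℝ) :
    ContDiff ℝ 1 fun x => energyFlux u x t :=
  (hu.dt.dt.contDiff_slice t).inner ℝ (crossL.isBoundedBilinearMap.contDiff.comp₂
    (hu.contDiff_slice t) (hu.dt.dt.dx.contDiff_slice t))

lemma energyFlux_eq_zero {T : ℝ} (hT : 0 < T) (hu : JointlySmooth u) {x t : ℝ}
    (hbd : ∀ s ∈ Icc 0 T, pdx u x s = 0) (ht : t ∈ Icc 0 T) : energyFlux u x t = 0 := by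
  have hw : pdx (pdt (pdt u)) x t = 0 := by
    rw [hu.dt.pdx_pdt_comm, hu.pdx_pdt_comm]
    exact hu.dx.dt.pdt_eq_zero hT (fun s hs => hu.dx.pdt_eq_zero hT hbd hs) ht
  rw [energyFlux, hw, cross3_zero_right, inner_zero_right]

lemma continuous_energyRate (hu : JointlySmooth u) (t : ℝ) :
    Continuous fun x => energyRate u x t := by
  have hux := hu.dx.continuous_slice t
  have hv := hu.dt.continuous_slice t
  have hvxx := hu.dt.dx.dx.continuous_slice t
  have hw := hu.dt.dt.continuous_slice t
  have hwx := hu.dt.dt.dx.continuous_slice t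
  unfold energyRate
  fun_prop

end JointlySmooth

namespace IsSol

variable {T : ℝ} {u : ℝ → ℝ → E3} {x t : ℝ}

lemma jointlySmooth (hu : IsSol T u) : JointlySmooth u := hu.1

lemma norm_eq_one (hu : IsSol T u) (hx : x ∈ Icc (0 : ℝ) 1) (ht : t ∈ Icc (0 : ℝ) T) :
    ‖u x t‖ = 1 := hu.2.1 x hx t ht

lemma pdt_eq (hu : IsSol T u) (hx : x ∈ Icc (0 : ℝ) 1) (ht : t ∈ Icc (0 : ℝ) T) :
    pdt u x t = cross3 (u x t) (pdx (pdx u) x t) := hu.2.2.1 x hx t ht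

lemma pdx_zero_eq_zero (hu : IsSol T u) (ht : t ∈ Icc (0 : ℝ) T) : pdx u 0 t = 0 :=
  (hu.2.2.2 t ht).1

lemma pdx_one_eq_zero (hu : IsSol T u) (ht : t ∈ Icc (0 : ℝ) T) : pdx u 1 t = 0 :=
  (hu.2.2.2 t ht).2

section EvolutionEquations

lemma pdt_pdt_eq (hT : 0 < T) (hu : IsSol T u) (hx : x ∈ Icc (0 : ℝ) 1)
    (ht : t ∈ Icc (0 : ℝ) T) :
    pdt (pdt u) x t
      = cross3 (pdt u x t) (pdx (pdx u) x t) + cross3 (u x t) (pdx (pdx (pdt u)) x t) := by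
  have hs := hu.jointlySmooth
  rw [hs.pdx_pdx_pdt_comm]
  exact eq_of_hasDerivAt_of_eqOn_Icc hT ht (fun _ => hu.pdt_eq hx) (hs.dt.hasDerivAt_pdt x t)
    (hasDerivAt_cross3 (hs.hasDerivAt_pdt x t) (hs.dx.dx.hasDerivAt_pdt x t))

lemma pdt_pdt_pdt_eq (hT : 0 < T) (hu : IsSol T u) (hx : x ∈ Icc (0 : ℝ) 1)
    (ht : t ∈ Icc (0 : ℝ) T) :
    pdt (pdt (pdt u)) x t
      = cross3 (pdt (pdt u) x t) (pdx (pdx u) x t)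
        + (2 : ℝ) • cross3 (pdt u x t) (pdx (pdx (pdt u)) x t)
        + cross3 (u x t) (pdx (pdx (pdt (pdt u))) x t) := by
  have hs := hu.jointlySmooth
  have h := eq_of_hasDerivAt_of_eqOn_Icc hT ht (fun _ => hu.pdt_pdt_eq hT hx)
    (hs.dt.dt.hasDerivAt_pdt x t)
    ((hasDerivAt_cross3 (hs.dt.hasDerivAt_pdt x t) (hs.dx.dx.hasDerivAt_pdt x t)).add
      (hasDerivAt_cross3 (hs.hasDerivAt_pdt x t) (hs.dt.dx.dx.hasDerivAt_pdt x t)))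
  rw [h, ← hs.dt.pdx_pdx_pdt_comm, ← hs.pdx_pdx_pdt_comm]
  module

end EvolutionEquations

section SecondSpaceDerivative

lemma inner_pdt_eq_zero (hu : IsSol T u) (hx : x ∈ Icc (0 : ℝ) 1) (ht : t ∈ Icc (0 : ℝ) T) :
    inner ℝ (u x t) (pdt u x t) = 0 := by
  rw [hu.pdt_eq hx ht, inner_self_cross3]

lemma inner_pdx_pdt_add_inner_pdx (hu : IsSol T u) (hx : x ∈ Icc (0 : ℝ) 1)
    (ht : t ∈ Icc (0 : ℝ) T) :
    inner ℝ (u x t) (pdx (pdt u) x t) + inner ℝ (pdx u x t) (pdt u x t) = 0 :=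
  have hs := hu.jointlySmooth
  eq_of_hasDerivAt_of_eqOn_Icc one_pos hx (fun _ hy => hu.inner_pdt_eq_zero hy ht)
    ((hs.hasDerivAt_pdx x t).inner ℝ (hs.dt.hasDerivAt_pdx x t)) (hasDerivAt_const x 0)

lemma inner_pdx_pdx_pdt (hu : IsSol T u) (hx : x ∈ Icc (0 : ℝ) 1) (ht : t ∈ Icc (0 : ℝ) T) :
    inner ℝ (u x t) (pdx (pdx (pdt u)) x t)
      = -(2 * inner ℝ (pdx u x t) (pdx (pdt u) x t) + inner ℝ (pdx (pdx u) x t) (pdt u x t)) := by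
  have hs := hu.jointlySmooth
  have h := eq_of_hasDerivAt_of_eqOn_Icc one_pos hx
    (fun _ hy => hu.inner_pdx_pdt_add_inner_pdx hy ht)
    (((hs.hasDerivAt_pdx x t).inner ℝ (hs.dt.dx.hasDerivAt_pdx x t)).add
      ((hs.dx.hasDerivAt_pdx x t).inner ℝ (hs.dt.hasDerivAt_pdx x t))) (hasDerivAt_const x 0)
  linarith

lemma norm_pdx_pdx_pdt_le (hT : 0 < T) (hu : IsSol T u) (hx : x ∈ Icc (0 : ℝ) 1)
    (ht : t ∈ Icc (0 : ℝ) T) :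
    ‖pdx (pdx (pdt u)) x t‖
      ≤ ‖pdt (pdt u) x t‖ + 2 * (‖pdt u x t‖ * ‖pdx (pdx u) x t‖)
        + 2 * (‖pdx u x t‖ * ‖pdx (pdt u) x t‖) := by
  have normal : |inner ℝ (u x t) (pdx (pdx (pdt u)) x t)|
      ≤ 2 * (‖pdx u x t‖ * ‖pdx (pdt u) x t‖) + ‖pdt u x t‖ * ‖pdx (pdx u) x t‖ := by
    rw [hu.inner_pdx_pdx_pdt hx ht, abs_neg]
    refine (abs_add_le _ _).trans ?_
    rw [abs_mul, abs_two, mul_comm ‖pdt u x t‖]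
    gcongr <;> exact abs_real_inner_le_norm _ _
  have tangential : ‖cross3 (u x t) (pdx (pdx (pdt u)) x t)‖
      ≤ ‖pdt (pdt u) x t‖ + ‖pdt u x t‖ * ‖pdx (pdx u) x t‖ := by
    rw [← sub_eq_iff_eq_add'.2 (hu.pdt_pdt_eq hT hx ht)]
    exact (norm_sub_le _ _).trans (by gcongr; exact norm_cross3_le _ _)
  linarith [norm_le_abs_inner_add_norm_cross3 (hu.norm_eq_one hx ht) (pdx (pdx (pdt u)) x t)]

end SecondSpaceDerivative

section Energy

lemma two_mul_inner_pdt_pdt_pdt (hT : 0 < T) (hu : IsSol T u) (hx : x ∈ Icc (0 : ℝ) 1)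
    (ht : t ∈ Icc (0 : ℝ) T) :
    2 * inner ℝ (pdt (pdt u) x t) (pdt (pdt (pdt u)) x t)
      = energyRate u x t + 2 * deriv (fun y => energyFlux u y t) x := by
  rw [hu.pdt_pdt_pdt_eq hT hx ht, (hu.jointlySmooth.hasDerivAt_energyFlux x t).deriv, energyRate,
    inner_add_right, inner_add_right, inner_self_cross3, real_inner_smul_right]
  ring

lemma hasDerivAt_L2sq_pdt_pdt (hT : 0 < T) (hu : IsSol T u) (ht : t ∈ Icc (0 : ℝ) T) :
    HasDerivAt (fun s => L2sq fun x => pdt (pdt u) x s)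
      (∫ x in (0 : ℝ)..1, energyRate u x t) t := by
  have hs := hu.jointlySmooth
  refine (hs.dt.dt.hasDerivAt_integral_norm_sq 0 1 t).congr_deriv ?_
  have hflux := hs.contDiff_energyFlux t
  have hflux' : Continuous (deriv fun y => energyFlux u y t) := hflux.continuous_deriv le_rfl
  have hrate := hs.continuous_energyRate t
  calc ∫ x in (0 : ℝ)..1, 2 * inner ℝ (pdt (pdt u) x t) (pdt (pdt (pdt u)) x t)
      = ∫ x in (0 : ℝ)..1, (energyRate u x t + 2 * deriv (fun y => energyFlux u y t) x) :=
        intervalIntegral.integral_congr fun x hx =>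
          hu.two_mul_inner_pdt_pdt_pdt hT (uIcc_of_le (zero_le_one' ℝ) ▸ hx) ht
    _ = (∫ x in (0 : ℝ)..1, energyRate u x t)
          + 2 * (energyFlux u 1 t - energyFlux u 0 t) := by
        rw [intervalIntegral.integral_add (hrate.intervalIntegrable _ _)
            (Continuous.intervalIntegrable (by fun_prop) _ _),
          intervalIntegral.integral_const_mul,
          intervalIntegral.integral_deriv_eq_sub
            (fun x _ => hflux.differentiable one_ne_zero x) (hflux'.intervalIntegrable _ _)]
    _ = ∫ x in (0 : ℝ)..1, energyRate u x t := by
        rw [hs.energyFlux_eq_zero hT (fun _ => hu.pdx_zero_eq_zero) ht,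
          hs.energyFlux_eq_zero hT (fun _ => hu.pdx_one_eq_zero) ht, sub_zero, mul_zero, add_zero]

lemma energyRate_le (hT : 0 < T) (hu : IsSol T u) (hx : x ∈ Icc (0 : ℝ) 1)
    (ht : t ∈ Icc (0 : ℝ) T) {K : ℝ} (hK : 1 ≤ K) (hv : ‖pdt u x t‖ ^ 2 ≤ K)
    (hux : ‖pdx u x t‖ ^ 2 ≤ K) :
    energyRate u x t ≤ K * (13 * ‖pdt (pdt u) x t‖ ^ 2 + 4 * ‖pdx (pdx u) x t‖ ^ 2
        + 4 * ‖pdx (pdt u) x t‖ ^ 2 + ‖pdx (pdt (pdt u)) x t‖ ^ 2) := by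
  have hvxx := hu.norm_pdx_pdx_pdt_le hT hx ht
  have hvvxx := (abs_le.1 (abs_inner_cross3_le (pdt (pdt u) x t) (pdt u x t)
    (pdx (pdx (pdt u)) x t))).2
  have huxwx := (abs_le.1 (abs_inner_cross3_le (pdt (pdt u) x t) (pdx u x t)
    (pdx (pdt (pdt u)) x t))).1
  set W := ‖pdt (pdt u) x t‖
  set V := ‖pdt u x t‖
  set P := ‖pdx u x t‖
  set Q := ‖pdx (pdx u) x t‖
  set R := ‖pdx (pdt u) x t‖
  set S := ‖pdx (pdt (pdt u)) x t‖
  have hVK : V ≤ K := by nlinarith only [hv, hK, sq_nonneg (V - 1)]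
  have hPK : P ≤ K := by nlinarith only [hux, hK, sq_nonneg (P - 1)]
  have hVPK : V * P ≤ K := by linarith [two_mul_le_add_sq V P]
  calc energyRate u x t
      ≤ 4 * (W * (V * (W + 2 * (V * Q) + 2 * (P * R)))) + 2 * (W * (P * S)) := by
        rw [energyRate]
        have : W * (V * ‖pdx (pdx (pdt u)) x t‖)
            ≤ W * (V * (W + 2 * (V * Q) + 2 * (P * R))) := by gcongr
        linarith
    _ = 4 * (V * W ^ 2) + 4 * (V ^ 2 * (2 * W * Q)) + 4 * (V * P * (2 * W * R))
          + P * (2 * W * S) := by ring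
    _ ≤ 4 * (K * W ^ 2) + 4 * (K * (W ^ 2 + Q ^ 2)) + 4 * (K * (W ^ 2 + R ^ 2))
          + K * (W ^ 2 + S ^ 2) := by gcongr <;> exact two_mul_le_add_sq _ _
    _ = K * (13 * W ^ 2 + 4 * Q ^ 2 + 4 * R ^ 2 + S ^ 2) := by ring

lemma integral_energyRate_le (hT : 0 < T) (hu : IsSol T u) (ht : t ∈ Icc (0 : ℝ) T) {K : ℝ}
    (hK : 1 ≤ K) (hv : ∀ x ∈ Icc (0 : ℝ) 1, ‖pdt u x t‖ ^ 2 ≤ K)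
    (hux : ∀ x ∈ Icc (0 : ℝ) 1, ‖pdx u x t‖ ^ 2 ≤ K) :
    ∫ x in (0 : ℝ)..1, energyRate u x t
      ≤ K * (13 * L2sq (fun x => pdt (pdt u) x t) + 4 * L2sq (fun x => pdx (pdx u) x t)
        + 4 * L2sq (fun x => pdx (pdt u) x t) + L2sq (fun x => pdx (pdt (pdt u)) x t)) := by
  have hs := hu.jointlySmooth
  have huxx := hs.dx.dx.continuous_slice t
  have hvx := hs.dt.dx.continuous_slice t
  have hw := hs.dt.dt.continuous_slice t
  have hwx := hs.dt.dt.dx.continuous_slice t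
  refine (intervalIntegral.integral_mono_on zero_le_one
    ((hs.continuous_energyRate t).intervalIntegrable _ _)
    (Continuous.intervalIntegrable (by fun_prop) _ _)
    fun x hx => hu.energyRate_le hT hx ht hK (hv x hx) (hux x hx)).trans_eq ?_
  have integrable (c : ℝ) {f : ℝ → E3} (hf : Continuous f) :
      IntervalIntegrable (fun x => c * ‖f x‖ ^ 2) volume 0 1 :=
    Continuous.intervalIntegrable (by fun_prop) _ _
  simp only [L2sq]
  rw [intervalIntegral.integral_const_mul,
    intervalIntegral.integral_add (Continuous.intervalIntegrable (by fun_prop) _ _)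
      (Continuous.intervalIntegrable (by fun_prop) _ _),
    intervalIntegral.integral_add (Continuous.intervalIntegrable (by fun_prop) _ _)
      (integrable 4 hvx),
    intervalIntegral.integral_add (integrable 13 hw) (integrable 4 huxx)]
  simp only [intervalIntegral.integral_const_mul]

end Energy

end IsSol

theorem utt_differential_inequality_schrodinger_flow_general {T : ℝ} (hT : 0 < T)
    {u : ℝ → ℝ → E3} (hu : IsSol T u) {t : ℝ} (ht : t ∈ Icc (0 : ℝ) T) :
    deriv (fun s => ∫ x in (0 : ℝ)..1, ‖pdt (pdt u) x s‖ ^ 2) t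
      ≤ 26 * (Hsq 1 (fun x => pdt u x t) + Hsq 2 (fun x => u x t) + 1) ^ 2
        * (Hsq 1 (fun x => pdt (pdt u) x t) + 1) := by
  have hs := hu.jointlySmooth
  have hw := Hsq_one_slice (pdt (pdt u)) t
  have hv := Hsq_one_slice (pdt u) t
  have hux := Hsq_one_slice (pdx u) t
  have hu2 : Hsq 1 (fun x => pdx u x t) ≤ Hsq 2 fun x => u x t := Hsq_deriv_le_Hsq_succ 1 _
  have hwx := L2sq_nonneg fun x => pdx (pdt (pdt u)) x t
  have hut := L2sq_nonneg fun x => pdt u x t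
  have hux0 := L2sq_nonneg fun x => pdx u x t
  have hV := Hsq_nonneg 1 fun x => pdt u x t
  have hU := Hsq_nonneg 2 fun x => u x t
  have hW := Hsq_nonneg 1 fun x => pdt (pdt u) x t
  set X := Hsq 1 (fun x => pdt u x t) + Hsq 2 (fun x => u x t) + 1 with hX
  have hX1 : 1 ≤ X := by linarith
  have hXW := le_mul_of_one_le_left hW hX1
  calc deriv (fun s => ∫ x in (0 : ℝ)..1, ‖pdt (pdt u) x s‖ ^ 2) t
      = ∫ x in (0 : ℝ)..1, energyRate u x t := (hu.hasDerivAt_L2sq_pdt_pdt hT ht).deriv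
    _ ≤ 2 * X * _ := hu.integral_energyRate_le hT ht (by linarith)
        (fun x hx => by linarith [hX, norm_sq_le_two_mul_Hsq_one (hs.dt.contDiff_slice t) hx])
        (fun x hx => by linarith [norm_sq_le_two_mul_Hsq_one (hs.dx.contDiff_slice t) hx])
    _ ≤ 2 * X * (13 * (X * (Hsq 1 (fun x => pdt (pdt u) x t) + 1))) := by gcongr; linarith
    _ = 26 * X ^ 2 * (Hsq 1 (fun x => pdt (pdt u) x t) + 1) := by ring

theorem utt_differential_inequality_schrodinger_flow :
    ∃ C > (0:ℝ), ∀ T > (0:ℝ), ∀ u : ℝ → ℝ → E3, IsSol T u →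
      ∀ t ∈ Icc (0:ℝ) T,
        deriv (fun s => ∫ x in (0:ℝ)..1, ‖pdt (pdt u) x s‖ ^ 2) t
          ≤ C * (Hsq 1 (fun x => pdt u x t) + Hsq 2 (fun x => u x t) + 1) ^ 3
            * (Hsq 1 (fun x => pdt (pdt u) x t) + 1) := by
  refine ⟨26, by norm_num, fun T hT u hu t ht =>
    (utt_differential_inequality_schrodinger_flow_general hT hu ht).trans ?_⟩
  have hV := Hsq_nonneg 1 fun x => pdt u x t
  have hU := Hsq_nonneg 2 fun x => u x t
  have hW := Hsq_nonneg 1 fun x => pdt (pdt u) x t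
  gcongr <;> linarith

end
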